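/- Let H(s) = C(A - sE)⁻¹B and Ĥ(s) = Ĉ(Â - sÊ)⁻¹B̂ be transfer functions of two asymptotically stable descriptor systems (E, Ê invertible, all generalized eigenvalues in the open left half-plane). Then the squared H₂-norm of the difference satisfies ‖H - Ĥ‖²_{H₂} = trace(C P Cᵀ) - 2 trace(C P̃ Ĉᵀ) + trace(Ĉ P̂ Ĉᵀ), where P and P̂ are the controllability Gramians of the two systems (solving A P Eᵀ + E P Aᵀ = -B Bᵀ and the analogous reduced equation), and P̃ solves the Sylvester equation A P̃ Êᵀ + E P̃ Âᵀ = -B B̂ᵀ. -/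

import Mathlib

open Matrix MeasureTheory

noncomputable section

/-- Complexification of a real matrix. -/
def cmap {a b : ℕ} (A : Matrix (Fin a) (Fin b) ℝ) : Matrix (Fin a) (Fin b) ℂ :=
  A.map fun x => (x : ℂ)

section HalfPlane

open Filter Topology Asymptotics Bornology Complex intervalIntegral

/-- Cauchy's theorem for the right half-plane: a function that is holomorphic on the closed
half-plane and decays like `z⁻²` has vanishing integral along the imaginary axis. -/
theorem tendsto_integral_imaginary_axis_zero {V : Type*} [NormedAddCommGroup V] [NormedSpace ℂ V]
    [CompleteSpace V] {f : ℂ → V} (hd : ∀ z : ℂ, 0 ≤ z.re → DifferentiableAt ℂ f z)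
    (hO : f =O[cobounded ℂ] fun z => z⁻¹ * z⁻¹) :
    Tendsto (fun T : ℝ => ∫ ω in (-T)..T, f (I * ω)) atTop (𝓝 0) := by
  obtain ⟨K, hK⟩ := hO.bound
  obtain ⟨r, -, hr⟩ := (hasBasis_cobounded_norm (E := ℂ)).mem_iff.1 hK
  have hbound : ∀ T : ℝ, 0 < T → r ≤ T → ∀ z : ℂ, T ≤ ‖z‖ → ‖f z‖ ≤ |K| * (T⁻¹ * T⁻¹) := by
    intro T hT hrT z hz
    have h := hr (show r ≤ ‖z‖ from hrT.trans hz)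
    refine (show ‖f z‖ ≤ K * ‖z⁻¹ * z⁻¹‖ from h).trans ?_
    rw [norm_mul, norm_inv]
    gcongr
    exact le_abs_self K
  have hlim : Tendsto (fun T : ℝ => 4 * |K| * T⁻¹) atTop (𝓝 0) := by
    simpa using tendsto_inv_atTop_zero.const_mul (4 * |K|)
  refine squeeze_zero_norm' ?_ hlim
  filter_upwards [eventually_ge_atTop r, eventually_gt_atTop 0] with T hrT hT
  have hb := hbound T hT hrT
  have hrect := integral_boundary_rect_eq_zero_of_differentiableOn f (-T * I) (T + T * I) (by
    intro z hz
    refine (hd z ?_).differentiableWithinAt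
    have := hz.1
    simp [Set.uIcc_of_le hT.le] at this
    exact this.1)
  simp only [neg_mul, neg_re, mul_re, ofReal_re, I_re, mul_zero, ofReal_im, I_im, mul_one,
    sub_self, neg_zero, add_re, add_zero, neg_im, mul_im, add_im, zero_add, ofReal_zero,
    ofReal_neg] at hrect
  have h1 := norm_integral_le_of_norm_le_const (a := 0) (b := T) (f := fun x : ℝ => f (x + -(T * I)))
    (C := |K| * (T⁻¹ * T⁻¹)) (fun x _ => hb _ <| by
      simpa [abs_of_pos hT] using abs_im_le_norm ((x : ℂ) + -(T * I)))
  have h2 := norm_integral_le_of_norm_le_const (a := 0) (b := T) (f := fun x : ℝ => f (x + T * I))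
    (C := |K| * (T⁻¹ * T⁻¹)) (fun x _ => hb _ <| by
      simpa [abs_of_pos hT] using abs_im_le_norm ((x : ℂ) + T * I))
  have h3 := norm_integral_le_of_norm_le_const (a := -T) (b := T) (f := fun y : ℝ => f (T + y * I))
    (C := |K| * (T⁻¹ * T⁻¹)) (fun y _ => hb _ <| by
      simpa [abs_of_pos hT] using abs_re_le_norm ((T : ℂ) + y * I))
  set a := ∫ x in (0 : ℝ)..T, f (x + -(T * I))
  set b := ∫ x in (0 : ℝ)..T, f (x + T * I)
  set c := ∫ y in (-T)..T, f (T + y * I)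
  have heq : I • (∫ ω in (-T)..T, f (I * ω)) = a - b + I • c := by
    simp_rw [mul_comm I]
    exact (sub_eq_zero.1 hrect).symm
  calc ‖∫ ω in (-T)..T, f (I * ω)‖ = ‖a - b + I • c‖ := by rw [← heq, norm_smul]; simp
    _ ≤ ‖a‖ + ‖b‖ + ‖c‖ := by
      refine (norm_add_le _ _).trans ?_
      rw [norm_smul, norm_I, one_mul]
      gcongr
      exact norm_sub_le _ _
    _ ≤ |K| * (T⁻¹ * T⁻¹) * |T - 0| + |K| * (T⁻¹ * T⁻¹) * |T - 0|
        + |K| * (T⁻¹ * T⁻¹) * |T - -T| := by gcongr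
    _ = 4 * |K| * T⁻¹ := by
      rw [sub_zero, sub_neg_eq_add, abs_of_pos hT, abs_of_pos (by linarith : 0 < T + T)]
      field_simp
      ring

/-- The principal value of `∫ (1 + iω)⁻¹ dω` is `π`. -/
theorem tendsto_integral_inv_one_add_I_mul :
    Tendsto (fun T : ℝ => ∫ ω in (-T)..T, (1 + I * ω : ℂ)⁻¹) atTop (𝓝 Real.pi) := by
  have hne : ∀ ω : ℝ, (1 + I * ω : ℂ) ≠ 0 := fun ω h => by simpa using congrArg re h
  have hc : Continuous fun ω : ℝ => (1 + I * ω : ℂ)⁻¹ := by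
    exact Continuous.inv₀ (by fun_prop) hne
  have key : ∀ T : ℝ, ∫ ω in (-T)..T, (1 + I * ω : ℂ)⁻¹ = (2 * Real.arctan T : ℝ) := by
    intro T
    have h1 : ∫ ω in (-T)..T, (1 + I * (-ω : ℝ) : ℂ)⁻¹ = ∫ ω in (-T)..T, (1 + I * ω : ℂ)⁻¹ := by
      simpa using integral_comp_neg (a := -T) (b := T) fun ω : ℝ => (1 + I * ω : ℂ)⁻¹
    have h2 : (∫ ω in (-T)..T, (1 + I * ω : ℂ)⁻¹) + ∫ ω in (-T)..T, (1 + I * (-ω : ℝ) : ℂ)⁻¹ =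
        ((∫ ω in (-T)..T, 2 * (1 + ω ^ 2 : ℝ)⁻¹ : ℝ) : ℂ) := by
      have hc' : Continuous fun ω : ℝ => (1 + I * (-ω : ℝ) : ℂ)⁻¹ := hc.comp continuous_neg
      rw [← integral_add (hc.intervalIntegrable _ _) (hc'.intervalIntegrable _ _), ← integral_ofReal]
      refine integral_congr fun ω _ => ?_
      have h3 := hne ω
      have h4 := hne (-ω)
      have h5 : (1 + ω ^ 2 : ℂ) = (1 + I * ω) * (1 + I * (-ω : ℝ)) := by
        push_cast; linear_combination (ω : ℂ) ^ 2 * I_sq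
      push_cast at h4 h5 ⊢
      rw [h5, inv_add_inv h3 h4, div_eq_mul_inv]
      congr 1
      ring
    rw [h1, intervalIntegral.integral_const_mul, integral_inv_one_add_sq, Real.arctan_neg] at h2
    push_cast at h2 ⊢
    linear_combination h2 / 2
  simp_rw [key]
  have := (Real.tendsto_arctan_atTop.mono_right nhdsWithin_le_nhds).const_mul 2
  rw [mul_div_cancel₀ _ two_ne_zero] at this
  exact (continuous_ofReal.tendsto _).comp this

variable {𝒜 : Type*} [NormedRing 𝒜] [NormedAlgebra ℂ 𝒜] [CompleteSpace 𝒜]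

theorem continuous_resolvent_imaginary_axis {a : 𝒜} (ha : ∀ z ∈ spectrum ℂ a, z.re < 0) :
    Continuous fun ω : ℝ => resolvent a (I * ω) := by
  refine continuous_iff_continuousAt.2 fun ω => ?_
  have h : I * (ω : ℂ) ∈ resolventSet ℂ a := by
    by_contra h
    simpa using ha _ h
  exact (spectrum.hasDerivAt_resolvent_const_left h).continuousAt.comp
    (f := fun ω : ℝ => I * (ω : ℂ)) (by fun_prop)

/-- The principal value of the integral of the resolvent of a stable element along the imaginary
axis is `π`. -/
theorem tendsto_integral_resolvent_imaginary_axis {a : 𝒜} (ha : ∀ z ∈ spectrum ℂ a, z.re < 0) :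
    Tendsto (fun T : ℝ => ∫ ω in (-T)..T, resolvent a (I * ω)) atTop
      (𝓝 ((Real.pi : ℂ) • (1 : 𝒜))) := by
  have hneg : ∀ z : ℂ, 0 ≤ z.re → z ∈ resolventSet ℂ (-1 : 𝒜) ∧
      resolvent (-1 : 𝒜) z = (1 + z)⁻¹ • (1 : 𝒜) := by
    intro z hz
    have hne : 1 + z ≠ 0 := fun h => by
      have := congrArg re h
      simp at this
      linarith
    have h : algebraMap ℂ 𝒜 z - -1 = algebraMap ℂ 𝒜 (1 + z) := by simp [add_comm]
    have hu : IsUnit (algebraMap ℂ 𝒜 z - -1) := h ▸ (IsUnit.mk0 _ hne).map (algebraMap ℂ 𝒜)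
    refine ⟨hu, ?_⟩
    rw [resolvent, h, ← Algebra.algebraMap_eq_smul_one]
    rw [← mul_one (Ring.inverse _), Ring.inverse_mul_eq_iff_eq_mul _ _ _ (h ▸ hu), ← map_mul,
      mul_inv_cancel₀ hne, map_one]
  have hmem : ∀ z : ℂ, 0 ≤ z.re → z ∈ resolventSet ℂ a := by
    intro z hz
    by_contra h
    exact hz.not_gt (ha _ h)
  have hzero := tendsto_integral_imaginary_axis_zero
    (f := fun z => resolvent a z - resolvent (-1 : 𝒜) z) (fun z hz =>
      (spectrum.hasDerivAt_resolvent_const_left (hmem z hz)).differentiableAt.sub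
        (spectrum.hasDerivAt_resolvent_const_left (hneg z hz).1).differentiableAt) (by
      have hev : ∀ b : 𝒜, ∀ᶠ z in cobounded ℂ, z ∈ resolventSet ℂ b := fun b => by
        have hb : ∀ᶠ z in cobounded ℂ, z ∈ (spectrum ℂ b)ᶜ :=
          isBounded_def.1 (spectrum.isBounded (𝕜 := ℂ) b)
        exact hb.mono fun z hz => not_not.1 hz
      have h := ((spectrum.resolvent_isBigO_inv (𝕜 := ℂ) a).mul
        (isBigO_const_const (a - -1) (one_ne_zero (α := ℂ)) _)).mul
          (spectrum.resolvent_isBigO_inv (𝕜 := ℂ) (-1 : 𝒜))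
      simp only [mul_one] at h
      refine h.congr' ?_ .rfl
      filter_upwards [hev a, hev (-1)] with z hz hz'
      exact (spectrum.resolvent_sub_resolvent hz hz').symm)
  have hone := (tendsto_integral_inv_one_add_I_mul.smul_const (1 : 𝒜))
  have hsum := hzero.add hone
  rw [zero_add] at hsum
  refine hsum.congr fun T => ?_
  have h1 := fun ω : ℝ => (hneg (I * ω) (by simp)).2
  have hc1 := continuous_resolvent_imaginary_axis ha
  have hc2 : Continuous fun ω : ℝ => resolvent (-1 : 𝒜) (I * ω) := by
    refine continuous_resolvent_imaginary_axis fun z hz => ?_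
    by_contra h
    exact hz (hneg z (not_lt.1 h)).1
  rw [integral_sub (hc1.intervalIntegrable _ _) (hc2.intervalIntegrable _ _)]
  simp_rw [h1, intervalIntegral.integral_smul_const]
  simp


theorem tendsto_integral_apply_resolvent_imaginary_axis {a : 𝒜}
    (ha : ∀ z ∈ spectrum ℂ a, z.re < 0) (L : 𝒜 →L[ℂ] ℂ) :
    Tendsto (fun T : ℝ => ∫ ω in (-T)..T, L (resolvent a (I * ω))) atTop
      (𝓝 (Real.pi * L 1)) := by
  have h := (L.continuous.tendsto _).comp (tendsto_integral_resolvent_imaginary_axis ha)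
  rw [map_smul, smul_eq_mul] at h
  refine h.congr fun T => ?_
  exact (L.intervalIntegral_comp_comm
    ((continuous_resolvent_imaginary_axis ha).intervalIntegrable _ _)).symm

theorem tendsto_integral_add_conj_resolvent {ℬ : Type*} [NormedRing ℬ] [NormedAlgebra ℂ ℬ]
    [CompleteSpace ℬ] {a : 𝒜} {b : ℬ} (ha : ∀ z ∈ spectrum ℂ a, z.re < 0)
    (hb : ∀ z ∈ spectrum ℂ b, z.re < 0) (L : 𝒜 →L[ℂ] ℂ) (L' : ℬ →L[ℂ] ℂ) :
    Tendsto (fun T : ℝ => ∫ ω in (-T)..T,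
        (L (resolvent a (I * ω)) + star (L' (resolvent b (I * ω))))) atTop
      (𝓝 (Real.pi * (L 1 + star (L' 1)))) := by
  have hlim := (tendsto_integral_apply_resolvent_imaginary_axis ha L).add
    (tendsto_integral_apply_resolvent_imaginary_axis hb L').star
  have hpi : Real.pi * L 1 + star (Real.pi * L' 1) = Real.pi * (L 1 + star (L' 1)) := by
    simp [mul_add]
  rw [hpi] at hlim
  refine hlim.congr fun T => ?_
  have hc := L.continuous.comp (continuous_resolvent_imaginary_axis ha)
  have hc' := L'.continuous.comp (continuous_resolvent_imaginary_axis hb)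
  have hstar : star (∫ ω in (-T)..T, L' (resolvent b (I * ω))) =
      ∫ ω in (-T)..T, star (L' (resolvent b (I * ω))) :=
    ((conjCLE : ℂ →L[ℝ] ℂ).intervalIntegral_comp_comm (hc'.intervalIntegrable _ _)).symm
  rw [hstar]
  exact (integral_add (hc.intervalIntegrable _ _) (hc'.star.intervalIntegrable _ _)).symm

theorem integrable_conj_resolvent_mul_resolvent {ℬ : Type*} [NormedRing ℬ] [NormedAlgebra ℂ ℬ]
    [CompleteSpace ℬ] {a : 𝒜} {b : ℬ} (ha : ∀ z ∈ spectrum ℂ a, z.re < 0)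
    (hb : ∀ z ∈ spectrum ℂ b, z.re < 0) (L : 𝒜 →L[ℂ] ℂ) (L' : ℬ →L[ℂ] ℂ) :
    Integrable fun ω : ℝ => star (L' (resolvent b (I * ω))) * L (resolvent a (I * ω)) := by
  have hc : Continuous fun ω : ℝ => star (L' (resolvent b (I * ω))) * L (resolvent a (I * ω)) :=
    (L'.continuous.comp (continuous_resolvent_imaginary_axis hb)).star.mul
      (L.continuous.comp (continuous_resolvent_imaginary_axis ha))
  refine hc.locallyIntegrable.integrable_of_isBigO_cocompact ?_
    (integrable_inv_one_add_sq.integrableAtFilter _)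
  have ht : Tendsto (fun ω : ℝ => I * (ω : ℂ)) (cocompact ℝ) (cobounded ℂ) := by
    rw [← tendsto_norm_atTop_iff_cobounded]
    refine (tendsto_norm_cocompact_atTop (E := ℝ)).congr fun ω => ?_
    simp
  have hL := ((L.isBigO_comp (resolvent a) (cobounded ℂ)).trans
    (spectrum.resolvent_isBigO_inv a)).comp_tendsto ht
  have hL' := ((L'.isBigO_comp (resolvent b) (cobounded ℂ)).trans
    (spectrum.resolvent_isBigO_inv b)).comp_tendsto ht
  have hstar : (fun ω : ℝ => star (L' (resolvent b (I * ω)))) =O[cocompact ℝ]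
      fun ω : ℝ => (I * (ω : ℂ))⁻¹ :=
    hL'.norm_left.congr_left (fun ω => (norm_star _).symm) |>.of_norm_left
  refine (hstar.mul hL).trans (IsBigO.of_bound 2 ?_)
  filter_upwards [(tendsto_norm_cocompact_atTop (E := ℝ)).eventually_ge_atTop 1] with ω hω
  have h1 : 1 ≤ ω ^ 2 := by
    rw [← sq_abs]
    exact one_le_pow₀ hω
  have h2 : ‖(I * (ω : ℂ))⁻¹ * (Inv.inv ∘ fun ω : ℝ => I * (ω : ℂ)) ω‖ = (ω ^ 2)⁻¹ := by
    simp [← sq]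
  rw [h2, Real.norm_of_nonneg (by positivity), ← div_eq_mul_inv, inv_eq_one_div,
    div_le_div_iff₀ (by positivity) (by positivity)]
  linarith

end HalfPlane

section Gramian

open Filter Topology Complex
open scoped Matrix.Norms.Operator

variable {n n' p m : Type*} [Fintype n] [DecidableEq n] [Fintype n'] [DecidableEq n']
  [Fintype p] [Fintype m]

/-- Frequency-domain pairing of two stable systems `(M, b, c)` and `(M', b', c')`, in terms of the
solution `X` of the associated Sylvester equation. -/
theorem integral_trace_transfer_pairing {M : Matrix n n ℂ} {M' : Matrix n' n' ℂ}
    (hM : ∀ z ∈ spectrum ℂ M, z.re < 0) (hM' : ∀ z ∈ spectrum ℂ M', z.re < 0)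
    {b : Matrix n m ℂ} {b' : Matrix n' m ℂ} (c : Matrix p n ℂ) (c' : Matrix p n' ℂ)
    {X : Matrix n n' ℂ} (hX : M * X + X * M'ᴴ = -(b * b'ᴴ)) :
    Integrable (fun ω : ℝ =>
      trace ((c' * resolvent M' (I * ω) * b')ᴴ * (c * resolvent M (I * ω) * b))) ∧
    ∫ ω : ℝ, trace ((c' * resolvent M' (I * ω) * b')ᴴ * (c * resolvent M (I * ω) * b)) =
      2 * Real.pi * trace (c * X * c'ᴴ) := by
  have hint : Integrable fun ω : ℝ =>
      trace ((c' * resolvent M' (I * ω) * b')ᴴ * (c * resolvent M (I * ω) * b)) := by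
    simp only [trace, diag_apply, mul_apply (M := (_ : Matrix _ _ ℂ)ᴴ), conjTranspose_apply]
    refine integrable_finsetSum _ fun j _ => integrable_finsetSum _ fun i _ => ?_
    exact integrable_conj_resolvent_mul_resolvent hM hM'
      (LinearMap.toContinuousLinearMap
        { toFun := fun Z => (c * Z * b) i j
          map_add' := fun Y Z => by simp [Matrix.mul_add, Matrix.add_mul]
          map_smul' := fun k Z => by simp })
      (LinearMap.toContinuousLinearMap
        { toFun := fun Z => (c' * Z * b') i j
          map_add' := fun Y Z => by simp [Matrix.mul_add, Matrix.add_mul]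
          map_smul' := fun k Z => by simp })
  refine ⟨hint, ?_⟩
  let L : Matrix n n ℂ →L[ℂ] ℂ := LinearMap.toContinuousLinearMap
    { toFun := fun Z => trace (c * Z * X * c'ᴴ)
      map_add' := fun Y Z => by simp [Matrix.mul_add, Matrix.add_mul]
      map_smul' := fun k Z => by simp }
  let L' : Matrix n' n' ℂ →L[ℂ] ℂ := LinearMap.toContinuousLinearMap
    { toFun := fun Z => trace (c' * Z * Xᴴ * cᴴ)
      map_add' := fun Y Z => by simp [Matrix.mul_add, Matrix.add_mul]
      map_smul' := fun k Z => by simp }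
  have hsplit : ∀ ω : ℝ,
      trace ((c' * resolvent M' (I * ω) * b')ᴴ * (c * resolvent M (I * ω) * b)) =
        L (resolvent M (I * ω)) + star (L' (resolvent M' (I * ω))) := by
    intro ω
    have hu : IsUnit (algebraMap ℂ (Matrix n n ℂ) (I * ω) - M) := by
      by_contra h
      simpa using hM _ h
    have hu' : IsUnit (algebraMap ℂ (Matrix n' n' ℂ) (I * ω) - M') := by
      by_contra h
      simpa using hM' _ h
    have hr := Ring.inverse_mul_cancel _ hu
    have hr' := congrArg conjTranspose (Ring.inverse_mul_cancel _ hu')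
    change resolvent M (I * ω) * _ = 1 at hr
    change (resolvent M' (I * ω) * _)ᴴ = 1ᴴ at hr'
    set R := resolvent M (I * ω)
    set R' := resolvent M' (I * ω)
    rw [conjTranspose_mul, conjTranspose_one] at hr'
    have hb : b * b'ᴴ = (algebraMap ℂ (Matrix n n ℂ) (I * ω) - M) * X +
        X * (algebraMap ℂ (Matrix n' n' ℂ) (I * ω) - M')ᴴ := by
      rw [← neg_neg (b * b'ᴴ), ← hX]
      simp [Algebra.algebraMap_eq_smul_one, Matrix.sub_mul, Matrix.mul_sub, conjTranspose_smul]
      abel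
    have hRR : R * (b * b'ᴴ) * R'ᴴ = X * R'ᴴ + R * X := by
      rw [hb, Matrix.mul_add, Matrix.add_mul, ← Matrix.mul_assoc, hr, Matrix.one_mul,
        ← Matrix.mul_assoc R X, Matrix.mul_assoc (R * X), hr', Matrix.mul_one]
    change _ = trace (c * R * X * c'ᴴ) + star (trace (c' * R' * Xᴴ * cᴴ))
    rw [trace_mul_comm, ← trace_conjTranspose]
    simp only [conjTranspose_mul, conjTranspose_conjTranspose]
    rw [← trace_add]
    congr 1
    calc c * R * b * (b'ᴴ * (R'ᴴ * c'ᴴ)) = c * (R * (b * b'ᴴ) * R'ᴴ) * c'ᴴ := by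
          simp only [Matrix.mul_assoc]
      _ = _ := by
          rw [hRR]
          simp only [Matrix.mul_assoc, Matrix.mul_add, Matrix.add_mul]
          abel
  have hlim := tendsto_integral_add_conj_resolvent hM hM' L L'
  have hlim' := intervalIntegral_tendsto_integral hint tendsto_neg_atTop_atBot tendsto_id
  refine (tendsto_nhds_unique hlim' (hlim.congr fun T =>
    intervalIntegral.integral_congr fun ω _ => (hsplit ω).symm)).trans ?_
  change (Real.pi : ℂ) * (trace (c * (1 : Matrix n n ℂ) * X * c'ᴴ) +
    star (trace (c' * (1 : Matrix n' n' ℂ) * Xᴴ * cᴴ))) = _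
  rw [← trace_conjTranspose]
  simp only [conjTranspose_mul, conjTranspose_conjTranspose, Matrix.mul_one, Matrix.mul_assoc]
  ring

end Gramian

theorem cmap_mul {a b c : ℕ} (A : Matrix (Fin a) (Fin b) ℝ) (B : Matrix (Fin b) (Fin c) ℝ) :
    cmap (A * B) = cmap A * cmap B :=
  Matrix.map_mul (f := Complex.ofRealHom)

theorem cmap_conjTranspose {a b : ℕ} (A : Matrix (Fin a) (Fin b) ℝ) : (cmap A)ᴴ = cmap Aᵀ := by
  ext i j
  simp [cmap]

theorem cmap_add {a b : ℕ} (A B : Matrix (Fin a) (Fin b) ℝ) : cmap (A + B) = cmap A + cmap B := by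
  ext i j
  simp [cmap]

theorem cmap_neg {a b : ℕ} (A : Matrix (Fin a) (Fin b) ℝ) : cmap (-A) = -cmap A := by
  ext i j
  simp [cmap]

theorem trace_cmap {a : ℕ} (A : Matrix (Fin a) (Fin a) ℝ) : trace (cmap A) = (trace A : ℝ) := by
  simp [cmap, trace]

theorem isUnit_cmap {n : ℕ} {E : Matrix (Fin n) (Fin n) ℝ} (hE : IsUnit E) : IsUnit (cmap E) :=
  hE.map Complex.ofRealHom.mapMatrix

section Descriptor

variable {n n' m p : ℕ}

theorem inv_pencil_eq_resolvent {A E : Matrix (Fin n) (Fin n) ℂ} (hE : IsUnit E) (z : ℂ) :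
    (A - z • E)⁻¹ = -(resolvent (E⁻¹ * A) z * E⁻¹) := by
  have hdet := (Matrix.isUnit_iff_isUnit_det _).1 hE
  have h : A - z • E = -E * (algebraMap ℂ (Matrix (Fin n) (Fin n) ℂ) z - E⁻¹ * A) := by
    rw [Algebra.algebraMap_eq_smul_one, Matrix.mul_sub, neg_mul, neg_mul,
      Matrix.mul_nonsing_inv_cancel_left _ _ hdet]
    simp
    abel
  have hneg : (-E)⁻¹ = -E⁻¹ :=
    Matrix.inv_eq_left_inv (by rw [neg_mul_neg, Matrix.nonsing_inv_mul _ hdet])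
  rw [h, Matrix.mul_inv_rev, hneg, mul_neg, resolvent, ← Matrix.nonsing_inv_eq_ringInverse]

theorem det_pencil_eq_zero_of_mem_spectrum {A E : Matrix (Fin n) (Fin n) ℂ} (hE : IsUnit E) {z : ℂ}
    (hz : z ∈ spectrum ℂ (E⁻¹ * A)) : (A - z • E).det = 0 := by
  have hdet := (Matrix.isUnit_iff_isUnit_det _).1 hE
  by_contra h
  refine hz ?_
  have heq : algebraMap ℂ (Matrix (Fin n) (Fin n) ℂ) z - E⁻¹ * A = -(E⁻¹ * (A - z • E)) := by
    rw [Algebra.algebraMap_eq_smul_one, Matrix.mul_sub, Matrix.mul_smul,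
      Matrix.nonsing_inv_mul _ hdet]
    abel
  change IsUnit _
  rw [heq]
  exact (((Matrix.isUnit_nonsing_inv_iff).2 hE).mul
    ((Matrix.isUnit_iff_isUnit_det _).2 (isUnit_iff_ne_zero.2 h))).neg

/-- Pairing of the transfer functions of two asymptotically stable descriptor systems. -/
theorem integral_trace_descriptor_pairing
    {A E : Matrix (Fin n) (Fin n) ℝ} {B : Matrix (Fin n) (Fin m) ℝ} (C : Matrix (Fin p) (Fin n) ℝ)
    {A' E' : Matrix (Fin n') (Fin n') ℝ} {B' : Matrix (Fin n') (Fin m) ℝ}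
    (C' : Matrix (Fin p) (Fin n') ℝ) (hE : IsUnit E) (hE' : IsUnit E')
    (hstab : ∀ μ : ℂ, (cmap A - μ • cmap E).det = 0 → μ.re < 0)
    (hstab' : ∀ μ : ℂ, (cmap A' - μ • cmap E').det = 0 → μ.re < 0)
    {X : Matrix (Fin n) (Fin n') ℝ} (hX : A * X * E'ᵀ + E * X * A'ᵀ = -(B * B'ᵀ)) :
    Integrable (fun ω : ℝ =>
      trace ((cmap C' * (cmap A' - (Complex.I * ω) • cmap E')⁻¹ * cmap B')ᴴ *
        (cmap C * (cmap A - (Complex.I * ω) • cmap E)⁻¹ * cmap B))) ∧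
    ∫ ω : ℝ, trace ((cmap C' * (cmap A' - (Complex.I * ω) • cmap E')⁻¹ * cmap B')ᴴ *
        (cmap C * (cmap A - (Complex.I * ω) • cmap E)⁻¹ * cmap B)) =
      (2 * Real.pi * trace (C * X * C'ᵀ) : ℝ) := by
  have hu := isUnit_cmap hE
  have hu' := isUnit_cmap hE'
  have hdet := (Matrix.isUnit_iff_isUnit_det _).1 hu
  have hdet' := (Matrix.isUnit_iff_isUnit_det _).1 hu'
  have hXc := congrArg cmap hX
  simp only [cmap_add, cmap_mul, cmap_neg, ← cmap_conjTranspose] at hXc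
  have hinv' : (cmap E')ᴴ * ((cmap E')⁻¹)ᴴ = 1 := by
    rw [← conjTranspose_mul, Matrix.nonsing_inv_mul _ hdet', conjTranspose_one]
  have hsylv : (cmap E)⁻¹ * cmap A * cmap X + cmap X * ((cmap E')⁻¹ * cmap A')ᴴ =
      -((cmap E)⁻¹ * cmap B * ((cmap E')⁻¹ * cmap B')ᴴ) := by
    have h := congrArg (fun Z => (cmap E)⁻¹ * Z * ((cmap E')⁻¹)ᴴ) hXc
    simp only [Matrix.mul_add, Matrix.add_mul, Matrix.mul_assoc, hinv', Matrix.mul_one,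
      Matrix.nonsing_inv_mul_cancel_left _ _ hdet, Matrix.mul_neg, Matrix.neg_mul] at h
    simpa only [conjTranspose_mul, Matrix.mul_assoc] using h
  have key := integral_trace_transfer_pairing
    (fun z hz => hstab z (det_pencil_eq_zero_of_mem_spectrum hu hz))
    (fun z hz => hstab' z (det_pencil_eq_zero_of_mem_spectrum hu' hz)) (cmap C) (cmap C') hsylv
  have htr : trace (cmap C * cmap X * (cmap C')ᴴ) = (trace (C * X * C'ᵀ) : ℝ) := by
    rw [cmap_conjTranspose, ← cmap_mul, ← cmap_mul, trace_cmap]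
  rw [htr] at key
  simpa only [inv_pencil_eq_resolvent hu, inv_pencil_eq_resolvent hu', Matrix.mul_neg,
    Matrix.neg_mul, conjTranspose_neg, neg_neg, Matrix.mul_assoc, Complex.ofReal_mul,
    Complex.ofReal_ofNat] using key

end Descriptor

theorem h2_error_gramian_formula {N r' m p : ℕ}
    (A E : Matrix (Fin N) (Fin N) ℝ) (B : Matrix (Fin N) (Fin m) ℝ)
    (C : Matrix (Fin p) (Fin N) ℝ)
    (Ah Eh : Matrix (Fin r') (Fin r') ℝ) (Bh : Matrix (Fin r') (Fin m) ℝ)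
    (Ch : Matrix (Fin p) (Fin r') ℝ)
    (hE : IsUnit E) (hEh : IsUnit Eh)
    (hstab : ∀ μ : ℂ, (cmap A - μ • cmap E).det = 0 → μ.re < 0)
    (hstabh : ∀ μ : ℂ, (cmap Ah - μ • cmap Eh).det = 0 → μ.re < 0)
    (P : Matrix (Fin N) (Fin N) ℝ) (Ph : Matrix (Fin r') (Fin r') ℝ)
    (Pt : Matrix (Fin N) (Fin r') ℝ)
    (hP : A * P * Eᵀ + E * P * Aᵀ = -(B * Bᵀ))
    (hPh : Ah * Ph * Ehᵀ + Eh * Ph * Ahᵀ = -(Bh * Bhᵀ))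
    (hPt : A * Pt * Ehᵀ + E * Pt * Ahᵀ = -(B * Bhᵀ))
    (Hd : ℝ → Matrix (Fin p) (Fin m) ℂ)
    (hHd : ∀ ω : ℝ, Hd ω =
        cmap C * (cmap A - (Complex.I * ω) • cmap E)⁻¹ * cmap B -
          cmap Ch * (cmap Ah - (Complex.I * ω) • cmap Eh)⁻¹ * cmap Bh) :
    (1 / (2 * Real.pi)) * ∫ ω : ℝ, (Matrix.trace ((Hd ω)ᴴ * Hd ω)).re =
      Matrix.trace (C * P * Cᵀ) - 2 * Matrix.trace (C * Pt * Chᵀ) +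
        Matrix.trace (Ch * Ph * Chᵀ) := by
  obtain ⟨i₁, e₁⟩ := integral_trace_descriptor_pairing C C hE hE hstab hstab hP
  obtain ⟨i₂, e₂⟩ := integral_trace_descriptor_pairing C Ch hE hEh hstab hstabh hPt
  obtain ⟨i₃, e₃⟩ := integral_trace_descriptor_pairing Ch Ch hEh hEh hstabh hstabh hPh
  set G := fun ω : ℝ => cmap C * (cmap A - (Complex.I * ω) • cmap E)⁻¹ * cmap B
  set Gh := fun ω : ℝ => cmap Ch * (cmap Ah - (Complex.I * ω) • cmap Eh)⁻¹ * cmap Bh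
  have hre : ∀ {f : ℝ → ℂ} {x : ℝ}, Integrable f → ∫ ω, f ω = (x : ℂ) →
      Integrable (fun ω => (f ω).re) ∧ ∫ ω, (f ω).re = x := fun {f x} hf hx =>
    ⟨hf.re, (integral_re hf).trans (by simpa using congrArg Complex.re hx)⟩
  obtain ⟨j₁, v₁⟩ := hre (f := fun ω => trace ((G ω)ᴴ * G ω)) i₁ e₁
  obtain ⟨j₂, v₂⟩ := hre (f := fun ω => trace ((Gh ω)ᴴ * G ω)) i₂ e₂
  obtain ⟨j₃, v₃⟩ := hre (f := fun ω => trace ((Gh ω)ᴴ * Gh ω)) i₃ e₃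
  have j₁₂ : Integrable fun ω =>
      (trace ((G ω)ᴴ * G ω)).re - 2 * (trace ((Gh ω)ᴴ * G ω)).re := j₁.sub (j₂.const_mul 2)
  have hexp : ∀ ω, (trace ((Hd ω)ᴴ * Hd ω)).re = (trace ((G ω)ᴴ * G ω)).re -
      2 * (trace ((Gh ω)ᴴ * G ω)).re + (trace ((Gh ω)ᴴ * Gh ω)).re := by
    intro ω
    have hconj : (trace ((G ω)ᴴ * Gh ω)).re = (trace ((Gh ω)ᴴ * G ω)).re := by
      rw [← Complex.conj_re, starRingEnd_apply, ← trace_conjTranspose, conjTranspose_mul,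
        conjTranspose_conjTranspose]
    rw [hHd, show _ - _ = G ω - Gh ω from rfl]
    simp only [conjTranspose_sub, Matrix.sub_mul, Matrix.mul_sub, trace_sub, Complex.sub_re, hconj]
    ring
  simp_rw [hexp]
  rw [integral_add j₁₂ j₃, integral_sub j₁ (j₂.const_mul 2), integral_const_mul, v₁, v₂, v₃]
  field_simp

end
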